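/- Let Δ^{K−1} be the probability simplex in ℝ^K, and let ℓ : ℝ^K → ℝ be twice continuously differentiable on an open convex neighborhood U of Δ^{K−1}, with Hessian H_ℓ satisfying the Lipschitz condition ‖H_ℓ(u) − H_ℓ(v)‖_op ≤ G‖u − v‖₂ for all u, v ∈ U, for some G ≥ 0. Let α ∈ ℝ_{>0}^K, α₀ = Σ_{j=1}^K α_j, p = α/α₀, let π be a Dirichlet(α)-distributed random vector, and define L₁(p) = (1/2) tr(H_ℓ(p)(Diag(p) − p pᵀ)). Then the remainder R(α) := 𝔼[ℓ(π)] − ℓ(p) − L₁(p)/(α₀ + 1) satisfies |R(α)| ≤ (G/3) · (1 − ‖p‖₂²)/(α₀ + 1) ≤ G/(3(α₀ + 1)). -/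

import Mathlib

open MeasureTheory ProbabilityTheory
open scoped RealInnerProductSpace

/-- The probability simplex `Δ^{K−1} ⊆ ℝ^K`. -/
def probSimplex (K : ℕ) : Set (EuclideanSpace ℝ (Fin K)) :=
  {q | (∀ i, 0 ≤ q i) ∧ ∑ i, q i = 1}

/-!
Expand `ℓ` to second order at the mean `p`. The Lipschitz Hessian bounds the pointwise error by
`G / 6 * ‖π - p‖ ^ 3 ≤ G / 3 * ‖π - p‖ ^ 2`, since two points of the simplex are at distance at
most `2`. In expectation the linear term vanishes, and the Dirichlet covariance
`(Diag p - p pᵀ) / (α₀ + 1)` turns the quadratic term into `L₁ / (α₀ + 1)` and `‖π - p‖ ^ 2` into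
`(1 - ‖p‖ ^ 2) / (α₀ + 1)`.

The moments of `π i = W i / S`, with `S = ∑ j, W j`, come from writing
`S ^ (-(n + 1)) = ∫ t ^ n / n! * exp (-t * S)` over `t > 0`: for fixed `t` the integrand factors
over the independent variables `W i`, and what remains is an integral in `t` depending only on `α₀`
and the total degree `n + 1`.
-/

open scoped Nat

section Taylor

variable {F : Type*} [NormedAddCommGroup F] [NormedSpace ℝ F]

lemma norm_le_mul_pow_succ_of_norm_deriv_le {f f' : ℝ → F} {b C : ℝ} {n : ℕ} (hf₀ : f 0 = 0)
    (hf : ∀ t ∈ Set.Icc 0 b, HasDerivAt f (f' t) t)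
    (hf' : ∀ t ∈ Set.Icc 0 b, ‖f' t‖ ≤ C * t ^ n) {t : ℝ} (ht : t ∈ Set.Icc 0 b) :
    ‖f t‖ ≤ C / (n + 1) * t ^ (n + 1) := by
  refine image_norm_le_of_norm_deriv_right_le_deriv_boundary
    (B := fun s ↦ C / (n + 1) * s ^ (n + 1)) (B' := fun s ↦ C * s ^ n)
    (fun s hs ↦ (hf s hs).continuousAt.continuousWithinAt)
    (fun s hs ↦ (hf s (Set.Ico_subset_Icc_self hs)).hasDerivWithinAt) (by simp [hf₀]) (fun s ↦ ?_)
    (fun s hs ↦ hf' s (Set.Ico_subset_Icc_self hs)) ht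
  refine ((hasDerivAt_pow (n + 1) s).const_mul (C / (n + 1))).congr_deriv ?_
  push_cast
  field_simp

lemma norm_sub_taylor_two_le {f f' f'' : ℝ → F} {C : ℝ}
    (hf : ∀ t ∈ Set.Icc (0 : ℝ) 1, HasDerivAt f (f' t) t)
    (hf' : ∀ t ∈ Set.Icc (0 : ℝ) 1, HasDerivAt f' (f'' t) t)
    (hf'' : ∀ t ∈ Set.Icc (0 : ℝ) 1, ‖f'' t - f'' 0‖ ≤ C * t) :
    ‖f 1 - (f 0 + f' 0 + (1 / 2 : ℝ) • f'' 0)‖ ≤ C / 6 := by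
  have first_order : ∀ t ∈ Set.Icc (0 : ℝ) 1, ‖f' t - f' 0 - t • f'' 0‖ ≤ C / 2 * t ^ 2 := by
    intro t ht
    simpa [one_add_one_eq_two] using norm_le_mul_pow_succ_of_norm_deriv_le (n := 1)
      (f := fun t ↦ f' t - f' 0 - t • f'' 0)
      (f' := fun t ↦ f'' t - f'' 0) (by simp)
      (fun s hs ↦ by
        simpa using ((hf' s hs).sub_const (f' 0)).fun_sub ((hasDerivAt_id s).smul_const (f'' 0)))
      (by simpa using hf'') ht
  have second_order := norm_le_mul_pow_succ_of_norm_deriv_le (n := 2)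
    (f := fun t ↦ f t - f 0 - t • f' 0 - (t ^ 2 / 2) • f'' 0)
    (f' := fun t ↦ f' t - f' 0 - t • f'' 0) (by simp)
    (fun s hs ↦ by
      simpa using (((hf s hs).sub_const (f 0)).fun_sub
        ((hasDerivAt_id s).smul_const (f' 0))).fun_sub
          (((hasDerivAt_pow 2 s).div_const 2).smul_const (f'' 0)))
    first_order (Set.right_mem_Icc.2 zero_le_one)
  calc ‖f 1 - (f 0 + f' 0 + (1 / 2 : ℝ) • f'' 0)‖
      = ‖f 1 - f 0 - (1 : ℝ) • f' 0 - ((1 : ℝ) ^ 2 / 2) • f'' 0‖ := by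
        rw [one_pow, one_smul, sub_sub, sub_sub]
        abel_nf
    _ ≤ C / 2 / ((2 : ℕ) + 1) * 1 ^ (2 + 1) := second_order
    _ = C / 6 := by ring

variable {E : Type*} [NormedAddCommGroup E] [InnerProductSpace ℝ E]
  {Ω : Type*} [MeasurableSpace Ω] {μ : Measure Ω}

lemma integrable_inner_clm_apply_self {X : Ω → E} (hX : MemLp X 2 μ) (A : E →L[ℝ] E) :
    Integrable (fun ω ↦ ⟪A (X ω), X ω⟫) μ := by
  refine ((hX.integrable_norm_pow two_ne_zero).const_mul ‖A‖).mono'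
    ((A.continuous.comp_aestronglyMeasurable hX.1).inner hX.1) (ae_of_all _ fun ω ↦ ?_)
  calc ‖⟪A (X ω), X ω⟫‖ ≤ ‖A (X ω)‖ * ‖X ω‖ := norm_inner_le_norm _ _
    _ ≤ ‖A‖ * ‖X ω‖ * ‖X ω‖ := by gcongr; exact A.le_opNorm _
    _ = ‖A‖ * ‖X ω‖ ^ 2 := by ring

variable [CompleteSpace E] {ℓ : E → ℝ} {grad : E → E} {Hess : E → E →L[ℝ] E} {G : ℝ}

lemma abs_sub_taylor_two_le {p q : E}
    (hgrad : ∀ x ∈ segment ℝ p q, HasGradientAt ℓ (grad x) x)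
    (hhess : ∀ x ∈ segment ℝ p q, HasFDerivAt grad (Hess x) x)
    (hlip : ∀ x ∈ segment ℝ p q, ‖Hess x - Hess p‖ ≤ G * ‖x - p‖) :
    |ℓ q - (ℓ p + ⟪grad p, q - p⟫ + 1 / 2 * ⟪Hess p (q - p), q - p⟫)| ≤ G / 6 * ‖q - p‖ ^ 3 := by
  set d := q - p with hd
  have mem_segment : ∀ t ∈ Set.Icc (0 : ℝ) 1, p + t • d ∈ segment ℝ p q := fun t ht ↦ by
    rw [segment_eq_image']
    exact ⟨t, ht, rfl⟩
  have line (t : ℝ) : HasDerivAt (fun t : ℝ ↦ p + t • d) d t := by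
    simpa using ((hasDerivAt_id t).smul_const d).const_add p
  have key := norm_sub_taylor_two_le (f := fun t ↦ ℓ (p + t • d))
    (f' := fun t ↦ ⟪grad (p + t • d), d⟫) (f'' := fun t ↦ ⟪Hess (p + t • d) d, d⟫)
    (C := G * ‖d‖ ^ 3)
    (fun t ht ↦ by
      simpa [Function.comp_def] using
        (hgrad _ (mem_segment t ht)).hasFDerivAt.comp_hasDerivAt t (line t))
    (fun t ht ↦ by
      simpa using ((hhess _ (mem_segment t ht)).comp_hasDerivAt t (line t)).inner ℝ
        (hasDerivAt_const t d))
    (fun t ht ↦ ?_)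
  · simpa [hd, mul_div_right_comm] using key
  · have hlip_t : ‖Hess (p + t • d) - Hess p‖ ≤ G * (t * ‖d‖) := by
      simpa [norm_smul, abs_of_nonneg ht.1] using hlip _ (mem_segment t ht)
    calc ‖⟪Hess (p + t • d) d, d⟫ - ⟪Hess (p + (0 : ℝ) • d) d, d⟫‖
        = ‖⟪(Hess (p + t • d) - Hess p) d, d⟫‖ := by simp [inner_sub_left]
      _ ≤ ‖Hess (p + t • d) - Hess p‖ * ‖d‖ * ‖d‖ :=
        (norm_inner_le_norm _ _).trans (by gcongr; exact ContinuousLinearMap.le_opNorm _ _)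
      _ ≤ G * (t * ‖d‖) * ‖d‖ * ‖d‖ := by gcongr
      _ = G * ‖d‖ ^ 3 * t := by ring

lemma abs_integral_sub_taylor_two_le [IsProbabilityMeasure μ] {s : Set E} (hs : Convex ℝ s)
    (hgrad : ∀ x ∈ s, HasGradientAt ℓ (grad x) x)
    (hhess : ∀ x ∈ s, HasFDerivAt grad (Hess x) x)
    (hlip : ∀ u ∈ s, ∀ v ∈ s, ‖Hess u - Hess v‖ ≤ G * ‖u - v‖)
    {X : Ω → E} {p : E} (hX : MemLp X 3 μ) (hXs : ∀ᵐ ω ∂μ, X ω ∈ s)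
    (hℓX : AEStronglyMeasurable (fun ω ↦ ℓ (X ω)) μ) (hp : p ∈ s) (hmean : μ[X] = p) :
    |(∫ ω, ℓ (X ω) ∂μ) - ℓ p - 1 / 2 * ∫ ω, ⟪Hess p (X ω - p), X ω - p⟫ ∂μ|
      ≤ G / 6 * ∫ ω, ‖X ω - p‖ ^ 3 ∂μ := by
  have hXp : MemLp (fun ω ↦ X ω - p) 3 μ := hX.sub (memLp_const p)
  have hX_int : Integrable X μ := hX.integrable (by norm_num)
  have hXp_int : Integrable (fun ω ↦ X ω - p) μ := hXp.integrable (by norm_num)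
  have hquad_int : Integrable (fun ω ↦ ⟪Hess p (X ω - p), X ω - p⟫) μ :=
    integrable_inner_clm_apply_self (hXp.mono_exponent (by norm_num)) (Hess p)
  have hlin_int : Integrable (fun ω ↦ ℓ p + ⟪grad p, X ω - p⟫) μ :=
    (integrable_const _).add (hXp_int.const_inner _)
  have hlin : ∫ ω, ℓ p + ⟪grad p, X ω - p⟫ ∂μ = ℓ p := by
    rw [integral_add (integrable_const _) (hXp_int.const_inner _),
      integral_inner hXp_int, integral_sub hX_int (integrable_const p), hmean]
    simp
  set T : Ω → ℝ := fun ω ↦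
    ℓ p + ⟪grad p, X ω - p⟫ + 1 / 2 * ⟪Hess p (X ω - p), X ω - p⟫ with hT
  have hT_int : Integrable T μ := hlin_int.add (hquad_int.const_mul _)
  have hbound : ∀ᵐ ω ∂μ, ‖ℓ (X ω) - T ω‖ ≤ G / 6 * ‖X ω - p‖ ^ 3 := by
    filter_upwards [hXs] with ω hω
    have hseg := hs.segment_subset hp hω
    exact abs_sub_taylor_two_le (fun x hx ↦ hgrad x (hseg hx)) (fun x hx ↦ hhess x (hseg hx))
      (fun x hx ↦ hlip x (hseg hx) p hp)
  have hbound_int : Integrable (fun ω ↦ G / 6 * ‖X ω - p‖ ^ 3) μ :=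
    (hXp.integrable_norm_pow (by norm_num)).const_mul _
  have hrem_int : Integrable (fun ω ↦ ℓ (X ω) - T ω) μ :=
    hbound_int.mono' (hℓX.sub hT_int.aestronglyMeasurable) hbound
  have hℓ_int : Integrable (fun ω ↦ ℓ (X ω)) μ :=
    (hrem_int.add hT_int).congr (ae_of_all _ fun ω ↦ sub_add_cancel _ _)
  calc |(∫ ω, ℓ (X ω) ∂μ) - ℓ p - 1 / 2 * ∫ ω, ⟪Hess p (X ω - p), X ω - p⟫ ∂μ|
      = ‖∫ ω, ℓ (X ω) - T ω ∂μ‖ := by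
        rw [integral_sub hℓ_int hT_int, hT, integral_add hlin_int (hquad_int.const_mul _), hlin,
          integral_const_mul, sub_sub, Real.norm_eq_abs]
    _ ≤ ∫ ω, G / 6 * ‖X ω - p‖ ^ 3 ∂μ := norm_integral_le_of_norm_le hbound_int hbound
    _ = G / 6 * ∫ ω, ‖X ω - p‖ ^ 3 ∂μ := integral_const_mul _ _

end Taylor

section Covariance

variable {ι Ω : Type*} [Fintype ι] [MeasurableSpace Ω] {μ : Measure Ω}

lemma inner_clm_apply_self_eq_sum [DecidableEq ι] (A : EuclideanSpace ℝ ι →L[ℝ] EuclideanSpace ℝ ι)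
    (d : EuclideanSpace ℝ ι) :
    ⟪A d, d⟫ = ∑ i, ∑ j, A (EuclideanSpace.single j 1) i * (d j * d i) := by
  have apply_eq_sum (i : ι) : A d i = ∑ j, d j * A (EuclideanSpace.single j 1) i := by
    conv_lhs => rw [← (EuclideanSpace.basisFun ι ℝ).sum_repr d, map_sum]
    simp
  simp only [PiLp.inner_apply, apply_eq_sum, RCLike.inner_apply, conj_trivial, Finset.mul_sum]
  exact Finset.sum_congr rfl fun i _ ↦ Finset.sum_congr rfl fun j _ ↦ by ring

lemma integral_inner_clm_apply_sub_mean [DecidableEq ι] [IsFiniteMeasure μ]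
    {X : Ω → EuclideanSpace ℝ ι} {p : EuclideanSpace ℝ ι} (hX : MemLp X 2 μ) (hmean : μ[X] = p)
    (A : EuclideanSpace ℝ ι →L[ℝ] EuclideanSpace ℝ ι) :
    ∫ ω, ⟪A (X ω - p), X ω - p⟫ ∂μ
      = ∑ i, ∑ j, A (EuclideanSpace.single j 1) i * cov[fun ω ↦ X ω j, fun ω ↦ X ω i; μ] := by
  have mean_apply (i : ι) : ∫ ω, X ω i ∂μ = p i := by
    rw [← hmean, eval_integral_piLp fun i ↦ (hX.eval_piLp i).integrable one_le_two]
  have hXp (i : ι) : MemLp (fun ω ↦ (X ω - p) i) 2 μ := (hX.sub (memLp_const p)).eval_piLp i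
  have hint (i j : ι) : Integrable
      (fun ω ↦ A (EuclideanSpace.single j 1) i * ((X ω - p) j * (X ω - p) i)) μ :=
    ((hXp j).integrable_mul (hXp i)).const_mul _
  simp only [inner_clm_apply_self_eq_sum, covariance, mean_apply]
  rw [integral_finsetSum _ fun i _ ↦ integrable_finsetSum _ fun j _ ↦ hint i j]
  refine Finset.sum_congr rfl fun i _ ↦ ?_
  rw [integral_finsetSum _ fun j _ ↦ hint i j]
  exact Finset.sum_congr rfl fun j _ ↦ integral_const_mul _ _

lemma integral_norm_sub_mean_sq [IsFiniteMeasure μ] {X : Ω → EuclideanSpace ℝ ι}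
    {p : EuclideanSpace ℝ ι} (hX : MemLp X 2 μ) (hmean : μ[X] = p) :
    ∫ ω, ‖X ω - p‖ ^ 2 ∂μ = ∑ i, cov[fun ω ↦ X ω i, fun ω ↦ X ω i; μ] := by
  classical
  simpa [Pi.single_apply] using integral_inner_clm_apply_sub_mean hX hmean (.id ℝ _)

end Covariance

section Gamma

lemma Gamma_add_natCast_eq_ascPochhammer_mul {a : ℝ} (ha : 0 < a) (n : ℕ) :
    Real.Gamma (a + n) = (ascPochhammer ℝ n).eval a * Real.Gamma a := by
  induction n with
  | zero => simp
  | succ n ih =>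
    rw [Nat.cast_succ, ← add_assoc, Real.Gamma_add_one (by positivity), ih,
      ascPochhammer_succ_eval]
    ring

lemma measurable_gammaPDF (a r : ℝ) : Measurable (gammaPDF a r) :=
  (measurable_gammaPDFReal a r).ennreal_ofReal

lemma ae_pos_gammaMeasure (a r : ℝ) : ∀ᵐ x ∂gammaMeasure a r, 0 < x := by
  rw [gammaMeasure, ae_withDensity_iff (measurable_gammaPDF a r)]
  filter_upwards [Measure.ae_ne volume 0] with x hx hpdf
  by_contra! hneg
  exact hpdf (gammaPDF_of_neg (hneg.lt_of_ne hx))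

lemma gammaPDF_mul_pow_mul_exp_neg_mul {a r t x : ℝ} (ha : 0 < a) (hr : 0 < r) (ht : 0 < r + t)
    (hx : x ≠ 0) (n : ℕ) :
    gammaPDF a r x * ENNReal.ofReal (x ^ n * Real.exp (-(t * x)))
      = ENNReal.ofReal ((ascPochhammer ℝ n).eval a * (r ^ a / (r + t) ^ (a + n)))
        * gammaPDF (a + n) (r + t) x := by
  rcases hx.lt_or_gt with hneg | hpos
  · simp [gammaPDF_of_neg hneg]
  have hrpow : x ^ (a + n - 1) = x ^ (a - 1) * x ^ n := by
    rw [← Real.rpow_natCast, ← Real.rpow_add hpos]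
    ring_nf
  have hexp : Real.exp (-((r + t) * x)) = Real.exp (-(r * x)) * Real.exp (-(t * x)) := by
    rw [← Real.exp_add]
    ring_nf
  have hasc := ascPochhammer_pos n a ha
  rw [gammaPDF_of_nonneg hpos.le, gammaPDF_of_nonneg hpos.le,
    ← ENNReal.ofReal_mul (by positivity), ← ENNReal.ofReal_mul (by positivity), hrpow, hexp,
    Gamma_add_natCast_eq_ascPochhammer_mul ha]
  congr 1
  field_simp

lemma lintegral_pow_mul_exp_neg_mul_gammaMeasure {a r t : ℝ} (ha : 0 < a) (hr : 0 < r)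
    (ht : 0 < r + t) (n : ℕ) :
    ∫⁻ x, ENNReal.ofReal (x ^ n * Real.exp (-(t * x))) ∂gammaMeasure a r
      = ENNReal.ofReal ((ascPochhammer ℝ n).eval a * (r ^ a / (r + t) ^ (a + n))) := by
  rw [gammaMeasure, lintegral_withDensity_eq_lintegral_mul _ (measurable_gammaPDF a r)
    (by fun_prop)]
  calc ∫⁻ x, gammaPDF a r x * ENNReal.ofReal (x ^ n * Real.exp (-(t * x)))
      = ∫⁻ x, ENNReal.ofReal ((ascPochhammer ℝ n).eval a * (r ^ a / (r + t) ^ (a + n)))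
          * gammaPDF (a + n) (r + t) x :=
        lintegral_congr_ae <| (Measure.ae_ne volume 0).mono fun x hx ↦
          gammaPDF_mul_pow_mul_exp_neg_mul ha hr ht hx n
    _ = ENNReal.ofReal ((ascPochhammer ℝ n).eval a * (r ^ a / (r + t) ^ (a + n))) := by
        rw [lintegral_const_mul _ (measurable_gammaPDF _ _),
          lintegral_gammaPDF_eq_one (by positivity) ht, mul_one]

lemma lintegral_Ioi_pow_mul_exp_neg_mul {s : ℝ} (hs : 0 < s) (n : ℕ) :
    ∫⁻ t in Set.Ioi (0 : ℝ), ENNReal.ofReal (t ^ n * Real.exp (-(s * t)))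
      = ENNReal.ofReal (n ! / s ^ (n + 1)) := by
  have hval : ∫ t in Set.Ioi (0 : ℝ), t ^ n * Real.exp (-(s * t)) = n ! / s ^ (n + 1) := by
    have := Real.integral_rpow_mul_exp_neg_mul_Ioi (a := n + 1) (by positivity) hs
    rw [Real.Gamma_nat_eq_factorial, ← Nat.cast_succ, Real.rpow_natCast] at this
    simpa [div_eq_inv_mul] using this
  rw [← hval, ofReal_integral_eq_lintegral_ofReal]
  · exact not_imp_comm.1 integral_undef (by rw [hval]; positivity)
  · filter_upwards [ae_restrict_mem measurableSet_Ioi] with t ht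
    have : 0 < t := ht
    positivity

lemma ofReal_prod_div_sum_pow_eq_lintegral {ι : Type*} [Fintype ι] [Nonempty ι] {x : ι → ℝ}
    (hx : ∀ i, 0 < x i) {m : ι → ℕ} {n : ℕ} (hm : ∑ i, m i = n + 1) :
    ENNReal.ofReal (∏ i, (x i / ∑ j, x j) ^ m i)
      = ∫⁻ t in Set.Ioi (0 : ℝ), ENNReal.ofReal (t ^ n / n !)
        * ∏ i, ENNReal.ofReal (x i ^ m i * Real.exp (-(t * x i))) := by
  have hsum : 0 < ∑ i, x i := Finset.sum_pos (fun i _ ↦ hx i) Finset.univ_nonempty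
  have hprod : 0 ≤ (∏ i, x i ^ m i) / n ! :=
    div_nonneg (Finset.prod_nonneg fun i _ ↦ pow_nonneg (hx i).le _) (by positivity)
  calc ENNReal.ofReal (∏ i, (x i / ∑ j, x j) ^ m i)
      = ENNReal.ofReal ((∏ i, x i ^ m i) / n !)
        * ENNReal.ofReal (n ! / (∑ i, x i) ^ (n + 1)) := by
        rw [← ENNReal.ofReal_mul hprod]
        simp only [div_pow, Finset.prod_div_distrib, Finset.prod_pow_eq_pow_sum, hm]
        congr 1
        field_simp
    _ = ∫⁻ t in Set.Ioi (0 : ℝ), ENNReal.ofReal ((∏ i, x i ^ m i) / n !)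
        * ENNReal.ofReal (t ^ n * Real.exp (-((∑ i, x i) * t))) := by
        rw [lintegral_const_mul _ (by fun_prop), lintegral_Ioi_pow_mul_exp_neg_mul hsum]
    _ = ∫⁻ t in Set.Ioi (0 : ℝ), ENNReal.ofReal (t ^ n / n !)
        * ∏ i, ENNReal.ofReal (x i ^ m i * Real.exp (-(t * x i))) := by
        refine setLIntegral_congr_fun measurableSet_Ioi fun t (ht : 0 < t) ↦ ?_
        rw [← ENNReal.ofReal_prod_of_nonneg fun i _ ↦
            mul_nonneg (pow_nonneg (hx i).le _) (Real.exp_pos _).le,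
          ← ENNReal.ofReal_mul hprod, ← ENNReal.ofReal_mul (by positivity),
          Finset.prod_mul_distrib, ← Real.exp_sum, Finset.sum_neg_distrib, ← Finset.mul_sum]
        ring_nf

end Gamma

/-- The family `W` consists of independent random variables, `W i` having the Gamma distribution
with shape `α i` and common rate `r`. The vector of proportions `W i / ∑ j, W j` is then
Dirichlet(`α`)-distributed, whatever the rate. -/
structure IsGammaFamily {ι Ω : Type*} [MeasurableSpace Ω] (W : ι → Ω → ℝ) (α : ι → ℝ) (r : ℝ)
    (μ : Measure Ω) : Prop where
  shape_pos : ∀ i, 0 < α i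
  rate_pos : 0 < r
  measurable : ∀ i, Measurable (W i)
  indep : iIndepFun W μ
  map_eq : ∀ i, μ.map (W i) = gammaMeasure (α i) r

namespace IsGammaFamily

lemma id_unit {a r : ℝ} (ha : 0 < a) (hr : 0 < r) :
    IsGammaFamily (fun _ : Unit ↦ id) (fun _ ↦ a) r (gammaMeasure a r) where
  shape_pos _ := ha
  rate_pos := hr
  measurable _ := measurable_id
  indep :=
    have := isProbabilityMeasure_gammaMeasure ha hr
    .of_subsingleton
  map_eq _ := Measure.map_id

variable {ι Ω : Type*} [MeasurableSpace Ω] {μ : Measure Ω} {W : ι → Ω → ℝ} {α : ι → ℝ} {r : ℝ}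

lemma ae_pos [Countable ι] (hW : IsGammaFamily W α r μ) : ∀ᵐ ω ∂μ, ∀ i, 0 < W i ω :=
  ae_all_iff.2 fun i ↦
    ae_of_ae_map (hW.measurable i).aemeasurable (hW.map_eq i ▸ ae_pos_gammaMeasure (α i) r)

variable [Fintype ι]

lemma lintegral_prod_pow_mul_exp_neg_mul (hW : IsGammaFamily W α r μ) (m : ι → ℕ) {t : ℝ}
    (ht : 0 < r + t) :
    ∫⁻ ω, ∏ i, ENNReal.ofReal (W i ω ^ m i * Real.exp (-(t * W i ω))) ∂μ
      = ENNReal.ofReal ((∏ i, (ascPochhammer ℝ (m i)).eval (α i))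
          * (r ^ (∑ i, α i) / (r + t) ^ (∑ i, α i + (∑ i, m i : ℕ)))) := by
  have hmeas := hW.measurable
  have hr := hW.rate_pos
  have hindep : iIndepFun (fun i ω ↦ ENNReal.ofReal (W i ω ^ m i * Real.exp (-(t * W i ω)))) μ :=
    hW.indep.comp (fun i x ↦ ENNReal.ofReal (x ^ m i * Real.exp (-(t * x)))) fun i ↦ by fun_prop
  have hmarginal (i : ι) : ∫⁻ ω, ENNReal.ofReal (W i ω ^ m i * Real.exp (-(t * W i ω))) ∂μ
      = ENNReal.ofReal
          ((ascPochhammer ℝ (m i)).eval (α i) * (r ^ α i / (r + t) ^ (α i + m i))) := by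
    rw [← lintegral_pow_mul_exp_neg_mul_gammaMeasure (hW.shape_pos i) hr ht, ← hW.map_eq i,
      lintegral_map (by fun_prop) (hmeas i)]
  rw [lintegral_prod_eq_prod_lintegral_of_indepFun _ _ hindep fun i ↦ by fun_prop]
  simp only [hmarginal]
  rw [← ENNReal.ofReal_prod_of_nonneg, Finset.prod_mul_distrib, Finset.prod_div_distrib,
    ← Real.rpow_sum_of_pos hr, ← Real.rpow_sum_of_pos ht, Finset.sum_add_distrib]
  · push_cast
    rfl
  intro i _
  have := ascPochhammer_pos (m i) (α i) (hW.shape_pos i)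
  positivity

lemma lintegral_prod_proportion_pow_eq_mul [Nonempty ι] (hW : IsGammaFamily W α r μ)
    {m : ι → ℕ} {n : ℕ} (hm : ∑ i, m i = n + 1) :
    ∫⁻ ω, ENNReal.ofReal (∏ i, (W i ω / ∑ j, W j ω) ^ m i) ∂μ
      = ENNReal.ofReal (∏ i, (ascPochhammer ℝ (m i)).eval (α i))
        * ∫⁻ t in Set.Ioi (0 : ℝ), ENNReal.ofReal (t ^ n / n !)
          * ENNReal.ofReal (r ^ (∑ i, α i) / (r + t) ^ (∑ i, α i + (n + 1 : ℕ))) := by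
  have := hW.indep.isProbabilityMeasure
  have hmeas := hW.measurable
  have hr := hW.rate_pos
  have hα_prod : 0 < ∏ i, (ascPochhammer ℝ (m i)).eval (α i) :=
    Finset.prod_pos fun i _ ↦ ascPochhammer_pos _ _ (hW.shape_pos i)
  have hmeas_prod : Measurable fun z : Ω × ℝ ↦ ENNReal.ofReal (z.2 ^ n / n !)
      * ∏ i, ENNReal.ofReal (W i z.1 ^ m i * Real.exp (-(z.2 * W i z.1))) := by
    have (i : ι) : Measurable fun z : Ω × ℝ ↦ W i z.1 := (hmeas i).comp measurable_fst
    fun_prop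
  calc ∫⁻ ω, ENNReal.ofReal (∏ i, (W i ω / ∑ j, W j ω) ^ m i) ∂μ
      = ∫⁻ ω, (∫⁻ t in Set.Ioi (0 : ℝ), ENNReal.ofReal (t ^ n / n !)
          * ∏ i, ENNReal.ofReal (W i ω ^ m i * Real.exp (-(t * W i ω)))) ∂μ :=
        lintegral_congr_ae <| hW.ae_pos.mono fun ω hω ↦ ofReal_prod_div_sum_pow_eq_lintegral hω hm
    _ = ∫⁻ t in Set.Ioi (0 : ℝ), ∫⁻ ω, ENNReal.ofReal (t ^ n / n !)
          * ∏ i, ENNReal.ofReal (W i ω ^ m i * Real.exp (-(t * W i ω))) ∂μ :=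
        lintegral_lintegral_swap hmeas_prod.aemeasurable
    _ = ∫⁻ t in Set.Ioi (0 : ℝ), ENNReal.ofReal (∏ i, (ascPochhammer ℝ (m i)).eval (α i))
          * (ENNReal.ofReal (t ^ n / n !)
            * ENNReal.ofReal (r ^ (∑ i, α i) / (r + t) ^ (∑ i, α i + (n + 1 : ℕ)))) := by
        refine setLIntegral_congr_fun measurableSet_Ioi fun t (ht : 0 < t) ↦ ?_
        rw [lintegral_const_mul _ (by fun_prop),
          hW.lintegral_prod_pow_mul_exp_neg_mul m (by positivity), hm,
          ENNReal.ofReal_mul hα_prod.le]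
        ring
    _ = _ := lintegral_const_mul _ (by fun_prop)

/-- A family with a single member has constant proportion `1`, which evaluates the integral left
over in `lintegral_prod_proportion_pow_eq_mul`. -/
lemma lintegral_betaPrime_kernel {a r : ℝ} (ha : 0 < a) (hr : 0 < r) (n : ℕ) :
    ∫⁻ t in Set.Ioi (0 : ℝ), ENNReal.ofReal (t ^ n / n !)
        * ENNReal.ofReal (r ^ a / (r + t) ^ (a + (n + 1 : ℕ)))
      = (ENNReal.ofReal ((ascPochhammer ℝ (n + 1)).eval a))⁻¹ := by
  have proportion_eq_one : ∀ᵐ x ∂gammaMeasure a r, ENNReal.ofReal ((x / x) ^ (n + 1)) = 1 := by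
    filter_upwards [ae_pos_gammaMeasure a r] with x hx
    simp [hx.ne']
  have := isProbabilityMeasure_gammaMeasure ha hr
  have key := (id_unit ha hr).lintegral_prod_proportion_pow_eq_mul (m := fun _ ↦ n + 1) (n := n)
    (by simp)
  simp only [Finset.univ_unique, Finset.prod_const, Finset.card_singleton, pow_one, id_eq,
    Finset.sum_singleton] at key
  rw [lintegral_congr_ae proportion_eq_one, lintegral_one, measure_univ] at key
  exact ENNReal.eq_inv_of_mul_eq_one_left (by rw [mul_comm, ← key])

lemma integral_prod_proportion_pow [Nonempty ι] (hW : IsGammaFamily W α r μ) (m : ι → ℕ) :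
    ∫ ω, ∏ i, (W i ω / ∑ j, W j ω) ^ m i ∂μ
      = (∏ i, (ascPochhammer ℝ (m i)).eval (α i))
        / (ascPochhammer ℝ (∑ i, m i)).eval (∑ i, α i) := by
  have := hW.indep.isProbabilityMeasure
  have hmeas := hW.measurable
  have hα_sum : 0 < ∑ i, α i := Finset.sum_pos (fun i _ ↦ hW.shape_pos i) Finset.univ_nonempty
  have hα_prod : 0 < ∏ i, (ascPochhammer ℝ (m i)).eval (α i) :=
    Finset.prod_pos fun i _ ↦ ascPochhammer_pos _ _ (hW.shape_pos i)
  have hnonneg : 0 ≤ᵐ[μ] fun ω ↦ ∏ i, (W i ω / ∑ j, W j ω) ^ m i := by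
    filter_upwards [hW.ae_pos] with ω hω
    exact Finset.prod_nonneg fun i _ ↦
      pow_nonneg (div_nonneg (hω i).le (Finset.sum_nonneg fun j _ ↦ (hω j).le)) _
  rcases hn : ∑ i, m i with _ | n
  · have hm : ∀ i, m i = 0 := by simpa using hn
    simp [hm]
  · rw [integral_eq_lintegral_of_nonneg_ae hnonneg (Measurable.aestronglyMeasurable (by fun_prop)),
      hW.lintegral_prod_proportion_pow_eq_mul hn,
      lintegral_betaPrime_kernel hα_sum hW.rate_pos, ENNReal.toReal_mul, ENNReal.toReal_inv,
      ENNReal.toReal_ofReal hα_prod.le,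
      ENNReal.toReal_ofReal (ascPochhammer_pos _ _ hα_sum).le, div_eq_mul_inv]

variable [Nonempty ι]

lemma integral_proportion (hW : IsGammaFamily W α r μ) (i : ι) :
    ∫ ω, W i ω / ∑ j, W j ω ∂μ = α i / ∑ j, α j := by
  classical
  have := hW.integral_prod_proportion_pow (Pi.single i 1)
  simpa [Pi.single_apply, pow_ite, apply_ite] using this

lemma integral_proportion_mul_proportion [DecidableEq ι] (hW : IsGammaFamily W α r μ) (i j : ι) :
    ∫ ω, (W i ω / ∑ k, W k ω) * (W j ω / ∑ k, W k ω) ∂μ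
      = (α i * α j + if i = j then α i else 0) / ((∑ k, α k) * (∑ k, α k + 1)) := by
  have key := hW.integral_prod_proportion_pow (Pi.single i 1 + Pi.single j 1)
  have hmonomial (x : ι → ℝ) :
      ∏ k, x k ^ (Pi.single i 1 + Pi.single j 1 : ι → ℕ) k = x i * x j := by
    simp only [Pi.add_apply, pow_add, Finset.prod_mul_distrib]
    simp [Pi.single_apply, pow_ite]
  have hpochhammer : ∏ k, (ascPochhammer ℝ ((Pi.single i 1 + Pi.single j 1 : ι → ℕ) k)).eval (α k)
      = α i * α j + if i = j then α i else 0 := by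
    rcases eq_or_ne i j with rfl | hij
    · rw [Fintype.prod_eq_single i fun k hk ↦ by simp [hk]]
      simp [ascPochhammer_succ_eval, mul_add]
    · rw [Fintype.prod_eq_mul i j hij fun k hk ↦ by simp [hk.1, hk.2]]
      simp [hij, hij.symm]
  have hdegree : ∑ k, (Pi.single i 1 + Pi.single j 1 : ι → ℕ) k = 2 := by
    simp [Finset.sum_add_distrib]
  simp only [hmonomial, hpochhammer, hdegree] at key
  simpa [ascPochhammer_succ_eval] using key

end IsGammaFamily

section Simplex

/-- The probability simplex of `ι → ℝ`, as a subset of the Euclidean space on `ι`. -/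
def euclideanSimplex (ι : Type*) [Fintype ι] : Set (EuclideanSpace ℝ ι) :=
  WithLp.ofLp ⁻¹' stdSimplex ℝ ι

/-- The vector `x` normalized to have coordinates summing to `1`. It turns independent Gamma
variables into a Dirichlet vector, and the Dirichlet parameter into the mean of that vector. -/
noncomputable def proportions {ι : Type*} [Fintype ι] (x : ι → ℝ) : EuclideanSpace ℝ ι :=
  WithLp.toLp 2 fun i ↦ x i / ∑ j, x j

variable {ι : Type*} [Fintype ι]

lemma convex_euclideanSimplex : Convex ℝ (euclideanSimplex ι) :=
  (convex_stdSimplex ℝ ι).linear_preimage (WithLp.linearEquiv 2 ℝ (ι → ℝ)).toLinearMap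

lemma isClosed_euclideanSimplex : IsClosed (euclideanSimplex ι) :=
  (isClosed_stdSimplex ℝ ι).preimage (PiLp.continuous_ofLp 2 _)

lemma norm_le_one_of_mem_euclideanSimplex {q : EuclideanSpace ℝ ι} (hq : q ∈ euclideanSimplex ι) :
    ‖q‖ ≤ 1 := by
  rw [← sq_le_one_iff₀ (norm_nonneg q), EuclideanSpace.real_norm_sq_eq, ← hq.2]
  exact Finset.sum_le_sum fun i _ ↦
    pow_le_of_le_one (hq.1 i) (mem_Icc_of_mem_stdSimplex hq i).2 two_ne_zero

lemma proportions_mem_euclideanSimplex [Nonempty ι] {x : ι → ℝ} (hx : ∀ i, 0 < x i) :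
    proportions x ∈ euclideanSimplex ι := by
  have hsum : 0 < ∑ i, x i := Finset.sum_pos (fun i _ ↦ hx i) Finset.univ_nonempty
  refine ⟨fun i ↦ div_nonneg (hx i).le hsum.le, ?_⟩
  simp [proportions, ← Finset.sum_div, hsum.ne']

lemma measurable_proportions : Measurable (proportions : (ι → ℝ) → EuclideanSpace ℝ ι) :=
  (WithLp.measurable_toLp 2 _).comp (by fun_prop)

end Simplex

lemma aestronglyMeasurable_comp_of_continuousOn {Ω E F : Type*} [MeasurableSpace Ω]
    [TopologicalSpace E] [SecondCountableTopology E] [MeasurableSpace E] [OpensMeasurableSpace E]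
    [TopologicalSpace F] [TopologicalSpace.PseudoMetrizableSpace F]
    {μ : Measure Ω} {s : Set E} {f : E → F} {X : Ω → E}
    (hf : ContinuousOn f s) (hs : MeasurableSet s) (hX : AEMeasurable X μ)
    (hXs : ∀ᵐ ω ∂μ, X ω ∈ s) : AEStronglyMeasurable (fun ω ↦ f (X ω)) μ := by
  have hmap : (μ.map X).restrict s = μ.map X :=
    Measure.restrict_eq_self_of_ae_mem ((ae_map_iff hX hs).2 hXs)
  exact (hmap ▸ hf.aestronglyMeasurable hs).comp_aemeasurable hX

namespace IsGammaFamily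

variable {ι Ω : Type*} [Fintype ι] [Nonempty ι] [MeasurableSpace Ω] {μ : Measure Ω}
  {W : ι → Ω → ℝ} {α : ι → ℝ} {r : ℝ}

lemma ae_proportions_mem (hW : IsGammaFamily W α r μ) :
    ∀ᵐ ω ∂μ, proportions (fun i ↦ W i ω) ∈ euclideanSimplex ι :=
  hW.ae_pos.mono fun _ hω ↦ proportions_mem_euclideanSimplex hω

lemma memLp_proportions (hW : IsGammaFamily W α r μ) (q : ENNReal) :
    MemLp (fun ω ↦ proportions fun i ↦ W i ω) q μ := by
  have := hW.indep.isProbabilityMeasure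
  refine .of_bound ?_ 1 (hW.ae_proportions_mem.mono fun _ ↦ norm_le_one_of_mem_euclideanSimplex)
  exact (measurable_proportions.comp (measurable_pi_lambda _ hW.measurable)).aestronglyMeasurable

lemma integral_proportions (hW : IsGammaFamily W α r μ) :
    ∫ ω, proportions (fun i ↦ W i ω) ∂μ = proportions α := by
  have := hW.indep.isProbabilityMeasure
  ext i
  rw [eval_integral_piLp fun i ↦ ((hW.memLp_proportions 1).eval_piLp i).integrable le_rfl]
  exact hW.integral_proportion i

lemma covariance_proportions [DecidableEq ι] (hW : IsGammaFamily W α r μ) (i j : ι) :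
    cov[fun ω ↦ proportions (fun k ↦ W k ω) i, fun ω ↦ proportions (fun k ↦ W k ω) j; μ]
      = ((if i = j then proportions α i else 0) - proportions α i * proportions α j)
        / (∑ k, α k + 1) := by
  have := hW.indep.isProbabilityMeasure
  have hα_sum : 0 < ∑ k, α k := Finset.sum_pos (fun k _ ↦ hW.shape_pos k) Finset.univ_nonempty
  rw [covariance_eq_sub ((hW.memLp_proportions 2).eval_piLp i)
    ((hW.memLp_proportions 2).eval_piLp j)]
  simp only [Pi.mul_apply, proportions, hW.integral_proportion,
    hW.integral_proportion_mul_proportion]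
  split_ifs <;> field_simp <;> ring

lemma integral_inner_clm_apply_proportions_sub [DecidableEq ι] (hW : IsGammaFamily W α r μ)
    (A : EuclideanSpace ℝ ι →L[ℝ] EuclideanSpace ℝ ι) :
    ∫ ω, ⟪A (proportions (fun i ↦ W i ω) - proportions α),
        proportions (fun i ↦ W i ω) - proportions α⟫ ∂μ
      = (∑ i, ∑ j, A (EuclideanSpace.single j 1) i
          * ((if j = i then proportions α j else 0) - proportions α j * proportions α i))
        / (∑ i, α i + 1) := by
  have := hW.indep.isProbabilityMeasure
  rw [integral_inner_clm_apply_sub_mean (hW.memLp_proportions 2) hW.integral_proportions]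
  simp only [hW.covariance_proportions, mul_div_assoc', ← Finset.sum_div]

lemma integral_norm_proportions_sub_sq (hW : IsGammaFamily W α r μ) :
    ∫ ω, ‖proportions (fun i ↦ W i ω) - proportions α‖ ^ 2 ∂μ
      = (1 - ‖proportions α‖ ^ 2) / (∑ i, α i + 1) := by
  classical
  have := hW.indep.isProbabilityMeasure
  rw [integral_norm_sub_mean_sq (hW.memLp_proportions 2) hW.integral_proportions]
  simp only [hW.covariance_proportions, if_true, ← Finset.sum_div, Finset.sum_sub_distrib, ← sq,
    (proportions_mem_euclideanSimplex hW.shape_pos).2, EuclideanSpace.real_norm_sq_eq]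

lemma integral_norm_proportions_sub_pow_three_le (hW : IsGammaFamily W α r μ) :
    ∫ ω, ‖proportions (fun i ↦ W i ω) - proportions α‖ ^ 3 ∂μ
      ≤ 2 * ((1 - ‖proportions α‖ ^ 2) / (∑ i, α i + 1)) := by
  have := hW.indep.isProbabilityMeasure
  have hcentered (q : ENNReal) :
      MemLp (fun ω ↦ proportions (fun i ↦ W i ω) - proportions α) q μ :=
    (hW.memLp_proportions q).sub (memLp_const _)
  rw [← hW.integral_norm_proportions_sub_sq, ← integral_const_mul]
  refine integral_mono_ae ((hcentered 3).integrable_norm_pow (by norm_num))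
    (((hcentered 2).integrable_norm_pow (by norm_num)).const_mul 2) ?_
  filter_upwards [hW.ae_proportions_mem] with ω hω
  have hdiam : ‖proportions (fun i ↦ W i ω) - proportions α‖ ≤ 2 := by
    linarith [norm_sub_le (proportions fun i ↦ W i ω) (proportions α),
      norm_le_one_of_mem_euclideanSimplex hω,
      norm_le_one_of_mem_euclideanSimplex (proportions_mem_euclideanSimplex hW.shape_pos)]
  rw [pow_succ']
  gcongr

end IsGammaFamily

theorem dirichlet_plugin_remainder_bound_general {ι Ω : Type*} [Fintype ι] [DecidableEq ι]
    [Nonempty ι] [MeasurableSpace Ω] {μ : Measure Ω}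
    {ℓ : EuclideanSpace ℝ ι → ℝ} {grad : EuclideanSpace ℝ ι → EuclideanSpace ℝ ι}
    {Hess : EuclideanSpace ℝ ι → EuclideanSpace ℝ ι →L[ℝ] EuclideanSpace ℝ ι}
    (hgrad : ∀ x ∈ euclideanSimplex ι, HasGradientAt ℓ (grad x) x)
    (hhess : ∀ x ∈ euclideanSimplex ι, HasFDerivAt grad (Hess x) x)
    {G : ℝ} (hG : 0 ≤ G)
    (hlip : ∀ u ∈ euclideanSimplex ι, ∀ v ∈ euclideanSimplex ι, ‖Hess u - Hess v‖ ≤ G * ‖u - v‖)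
    {W : ι → Ω → ℝ} {α : ι → ℝ} {r : ℝ} (hW : IsGammaFamily W α r μ)
    {π : Ω → EuclideanSpace ℝ ι} (hπ : ∀ ω i, π ω i = W i ω / ∑ j, W j ω)
    {α₀ : ℝ} (hα₀ : α₀ = ∑ j, α j)
    {p : EuclideanSpace ℝ ι} (hp : ∀ i, p i = α i / α₀)
    {L1 : ℝ} (hL1 : L1 = (1 / 2) * ∑ i, ∑ j,
      Hess p (EuclideanSpace.single j 1) i * ((if j = i then p j else 0) - p j * p i))
    {R : ℝ} (hR : R = (∫ ω, ℓ (π ω) ∂μ) - ℓ p - L1 / (α₀ + 1)) :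
    |R| ≤ G / 3 * (1 - ‖p‖ ^ 2) / (α₀ + 1) ∧
      G / 3 * (1 - ‖p‖ ^ 2) / (α₀ + 1) ≤ G / (3 * (α₀ + 1)) := by
  have := hW.indep.isProbabilityMeasure
  obtain rfl : π = fun ω ↦ proportions fun i ↦ W i ω := by ext ω i; exact hπ ω i
  obtain rfl : p = proportions α := by ext i; rw [hp, hα₀]; rfl
  have hα₀_pos : 0 < α₀ := hα₀ ▸ Finset.sum_pos (fun i _ ↦ hW.shape_pos i) Finset.univ_nonempty
  have hℓπ := aestronglyMeasurable_comp_of_continuousOn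
    (fun x hx ↦ (hgrad x hx).continuousAt.continuousWithinAt)
    isClosed_euclideanSimplex.measurableSet (hW.memLp_proportions 1).aemeasurable
    hW.ae_proportions_mem
  have htaylor := abs_integral_sub_taylor_two_le convex_euclideanSimplex hgrad hhess hlip
    (hW.memLp_proportions 3) hW.ae_proportions_mem hℓπ
    (proportions_mem_euclideanSimplex hW.shape_pos) hW.integral_proportions
  rw [hW.integral_inner_clm_apply_proportions_sub, mul_div_assoc', ← hL1, ← hα₀, ← hR] at htaylor
  constructor
  · calc |R| ≤ G / 6 * ∫ ω, ‖proportions (fun i ↦ W i ω) - proportions α‖ ^ 3 ∂μ := htaylor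
      _ ≤ G / 6 * (2 * ((1 - ‖proportions α‖ ^ 2) / (α₀ + 1))) := by
          rw [hα₀]
          gcongr
          exact hW.integral_norm_proportions_sub_pow_three_le
      _ = G / 3 * (1 - ‖proportions α‖ ^ 2) / (α₀ + 1) := by ring
  · calc G / 3 * (1 - ‖proportions α‖ ^ 2) / (α₀ + 1) ≤ G / 3 * 1 / (α₀ + 1) := by
          gcongr
          exact sub_le_self _ (sq_nonneg _)
      _ = G / (3 * (α₀ + 1)) := by rw [mul_one, div_div]

/-- **Remainder bound for the plug-in expansion of Dirichlet-expected losses.**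
Let `ℓ : ℝ^K → ℝ` be twice continuously differentiable on an open convex
neighborhood `U` of the probability simplex, with gradient `grad` and Hessian
`Hess` (viewed at each point as a linear map `ℝ^K → ℝ^K`), where the Hessian
is `G`-Lipschitz in operator norm on `U`.  Let `π` be a Dirichlet(α) random
vector realized as `π_i = W_i / Σ_j W_j` with `W_i` independent Gamma(α_i, 1)
random variables, `α₀ = Σ_j α_j`, `p = α/α₀`, and let
`L₁(p) = ½ tr(Hess(p)(Diag(p) − p pᵀ))` (written via matrix entries
`Hess(p)_{ij} = (Hess(p) e_j)_i`).  Then the remainder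
`R(α) = 𝔼[ℓ(π)] − ℓ(p) − L₁(p)/(α₀ + 1)` satisfies
`|R(α)| ≤ (G/3)(1 − ‖p‖₂²)/(α₀ + 1) ≤ G/(3(α₀ + 1))`. -/
theorem dirichlet_plugin_remainder_bound {K : ℕ} (hK : 0 < K)
    {Ω : Type*} [MeasurableSpace Ω] (μ : Measure Ω) [IsProbabilityMeasure μ]
    (U : Set (EuclideanSpace ℝ (Fin K))) (hUopen : IsOpen U) (hUconv : Convex ℝ U)
    (hUsimplex : probSimplex K ⊆ U)
    (ℓ : EuclideanSpace ℝ (Fin K) → ℝ)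
    (grad : EuclideanSpace ℝ (Fin K) → EuclideanSpace ℝ (Fin K))
    (Hess : EuclideanSpace ℝ (Fin K) →
      EuclideanSpace ℝ (Fin K) →L[ℝ] EuclideanSpace ℝ (Fin K))
    (hℓ : ContDiffOn ℝ 2 ℓ U)
    (hgrad : ∀ x ∈ U, HasGradientAt ℓ (grad x) x)
    (hhess : ∀ x ∈ U, HasFDerivAt grad (Hess x) x)
    (G : ℝ) (hG : 0 ≤ G)
    (hlip : ∀ u ∈ U, ∀ v ∈ U, ‖Hess u - Hess v‖ ≤ G * ‖u - v‖)
    (α : Fin K → ℝ) (hα : ∀ i, 0 < α i)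
    (W : Fin K → Ω → ℝ) (hWmeas : ∀ i, Measurable (W i))
    (hWindep : iIndepFun W μ)
    (hWlaw : ∀ i, μ.map (W i) = gammaMeasure (α i) 1)
    (π : Ω → EuclideanSpace ℝ (Fin K))
    (hπ : ∀ ω i, π ω i = W i ω / ∑ j, W j ω)
    (α₀ : ℝ) (hα₀ : α₀ = ∑ j, α j)
    (p : EuclideanSpace ℝ (Fin K)) (hp : ∀ i, p i = α i / α₀)
    (L1 : ℝ)
    (hL1 : L1 = (1 / 2) * ∑ i, ∑ j,
      Hess p (EuclideanSpace.single j 1) i * ((if j = i then p j else 0) - p j * p i))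
    (R : ℝ) (hR : R = (∫ ω, ℓ (π ω) ∂μ) - ℓ p - L1 / (α₀ + 1)) :
    |R| ≤ G / 3 * (1 - ‖p‖ ^ 2) / (α₀ + 1) ∧
      G / 3 * (1 - ‖p‖ ^ 2) / (α₀ + 1) ≤ G / (3 * (α₀ + 1)) := by
  have : Nonempty (Fin K) := Fin.pos_iff_nonempty.1 hK
  exact dirichlet_plugin_remainder_bound_general (fun x hx ↦ hgrad x (hUsimplex hx))
    (fun x hx ↦ hhess x (hUsimplex hx)) hG
    (fun u hu v hv ↦ hlip u (hUsimplex hu) v (hUsimplex hv))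
    ⟨hα, one_pos, hWmeas, hWindep, hWlaw⟩ hπ hα₀ hp hL1 hR
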